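/- Let L ≥ 1 be an integer, λ > 0, and let M♮ ∈ ℝ^{m × n}. Let M* be any global minimizer over ℝ^{m×n} of the Schatten-regularized objective 𝓛_{M♮}(M) := ‖M♮ − M‖_F² + λ·‖M‖_{S^{2/L}}^{2/L}. Then M* and M♮ share singular vectors: there exist orthogonal matrices U ∈ ℝ^{m×m} and V ∈ ℝ^{n×n} and rectangular-diagonal matrices Σ♮, Σ* ∈ ℝ^{m×n} with non-negative, non-increasingly ordered diagonal entries such that M♮ = U·Σ♮·Vᵀ and M* = U·Σ*·Vᵀ simultaneously. -/

import Mathlib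

open Matrix

/-- The `i`-th largest singular value of a real matrix `A` (`0`-indexed),
i.e. the non-increasing rearrangement of the square roots of the
eigenvalues of the positive semidefinite matrix `Aᵀ A`. -/
noncomputable def singularValue {m n : ℕ} (A : Matrix (Fin m) (Fin n) ℝ) (i : Fin (min m n)) : ℝ :=
  let ev : Fin n → ℝ := fun j => Real.sqrt ((Matrix.isHermitian_conjTranspose_mul_self A).eigenvalues j)
  (ev ∘ Tuple.sort ev) ((Fin.castLE (Nat.min_le_right m n) i).rev)

/-- Frobenius norm of a real matrix. -/
noncomputable def frobNorm {m n : ℕ} (A : Matrix (Fin m) (Fin n) ℝ) : ℝ :=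
  Real.sqrt (∑ i, ∑ j, (A i j) ^ 2)

/-- `‖A‖_{S^q}^q = ∑_{i=1}^{min m n} σ_i(A)^q`. -/
noncomputable def schattenPow {m n : ℕ} (A : Matrix (Fin m) (Fin n) ℝ) (q : ℝ) : ℝ :=
  ∑ i : Fin (min m n), (singularValue A i) ^ q

/-- Schatten-`q` quasi-norm `‖A‖_{S^q} = (∑ σ_i(A)^q)^{1/q}`. -/
noncomputable def schattenNorm {m n : ℕ} (A : Matrix (Fin m) (Fin n) ℝ) (q : ℝ) : ℝ :=
  (schattenPow A q) ^ (1 / q)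

/-- `chainProd d W L = W_{L-1} * ⋯ * W_1 * W_0` (the end-to-end product of the
first `L` layers, `W_i : ℝ^{d_{i+1} × d_i}`). -/
noncomputable def chainProd (d : ℕ → ℕ) (W : ∀ i : ℕ, Matrix (Fin (d (i + 1))) (Fin (d i)) ℝ) :
    (L : ℕ) → Matrix (Fin (d L)) (Fin (d 0)) ℝ
  | 0 => 1
  | (L + 1) => W L * chainProd d W L

/-- The ℓ²-regularized deep matrix factorization objective
`𝓛(W) = ‖M♮ − W_L ⋯ W_1‖_F² + (λ/L) ∑ᵢ ‖W_i‖_F²`. -/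
noncomputable def deepLoss (L : ℕ) (lam : ℝ) (d : ℕ → ℕ)
    (Mnat : Matrix (Fin (d L)) (Fin (d 0)) ℝ)
    (W : ∀ i : ℕ, Matrix (Fin (d (i + 1))) (Fin (d i)) ℝ) : ℝ :=
  frobNorm (Mnat - chainProd d W L) ^ 2 + (lam / L) * ∑ i : Fin L, frobNorm (W i.1) ^ 2

/-- The Schatten-regularized objective
`𝓛_{M♮}(M) = ‖M♮ − M‖_F² + λ‖M‖_{S^{2/L}}^{2/L}`. -/
noncomputable def schattenLoss (L : ℕ) (lam : ℝ) {m n : ℕ}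
    (Mnat M : Matrix (Fin m) (Fin n) ℝ) : ℝ :=
  frobNorm (Mnat - M) ^ 2 + lam * schattenPow M (2 / L)

lemma sv_inv {m n : ℕ} (A : Matrix (Fin m) (Fin n) ℝ) (P : Matrix (Fin m) (Fin m) ℝ)
    (Q : Matrix (Fin n) (Fin n) ℝ) (hP : Pᵀ * P = 1) (hQ : Qᵀ * Q = 1) (q : ℝ) :
    schattenPow (P * A * Q) q = schattenPow A q := by
  have hQ' : Q * Qᵀ = 1 := mul_eq_one_comm.mp hQ
  have h : (Matrix.isHermitian_conjTranspose_mul_self (P * A * Q)).eigenvalues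
      = (Matrix.isHermitian_conjTranspose_mul_self A).eigenvalues := by
    rw [Matrix.IsHermitian.eigenvalues_eq_eigenvalues_iff]
    have e : (P * A * Q)ᴴ * (P * A * Q) = Qᵀ * ((Aᴴ * A) * Q) := by
      simp only [conjTranspose_eq_transpose_of_trivial, transpose_mul]
      calc _ = Qᵀ * (Aᵀ * (Pᵀ * P) * A * Q) := by simp only [Matrix.mul_assoc]
        _ = _ := by rw [hP]; simp [Matrix.mul_assoc]
    rw [e, Matrix.charpoly_mul_comm, Matrix.mul_assoc, hQ', Matrix.mul_one]
  unfold schattenPow singularValue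
  simp only [h]

lemma frob_sq {m n : ℕ} (A : Matrix (Fin m) (Fin n) ℝ) : frobNorm A ^ 2 = trace (Aᵀ * A) := by
  have h0 : 0 ≤ ∑ i, ∑ j, (A i j) ^ 2 :=
    Finset.sum_nonneg fun i _ => Finset.sum_nonneg fun j _ => sq_nonneg _
  rw [frobNorm, Real.sq_sqrt h0]
  rw [Finset.sum_comm]
  simp [trace, Matrix.mul_apply, sq]

lemma frob_zero {m n : ℕ} (A : Matrix (Fin m) (Fin n) ℝ) (h : trace (Aᵀ * A) ≤ 0) : A = 0 := by
  have h2 : trace (Aᵀ * A) = ∑ j, ∑ i, A i j ^ 2 := by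
    simp [trace, Matrix.mul_apply, sq]
  have h0 : ∑ j, ∑ i, A i j ^ 2 = 0 :=
    le_antisymm (h2 ▸ h) (Finset.sum_nonneg fun i _ => Finset.sum_nonneg fun j _ => sq_nonneg _)
  ext i j
  rw [Finset.sum_eq_zero_iff_of_nonneg
    (fun i _ => Finset.sum_nonneg fun j _ => sq_nonneg _)] at h0
  have h1 := h0 j (Finset.mem_univ _)
  rw [Finset.sum_eq_zero_iff_of_nonneg (fun j _ => sq_nonneg _)] at h1
  simpa using h1 i (Finset.mem_univ _)

lemma tr_sq {m n : ℕ} (A B : Matrix (Fin m) (Fin n) ℝ) :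
    trace ((A - B)ᵀ * (A - B)) = trace (Aᵀ * A) - 2 * trace (Aᵀ * B) + trace (Bᵀ * B) := by
  have : trace (Bᵀ * A) = trace (Aᵀ * B) := by
    rw [← trace_transpose, transpose_mul, transpose_transpose]
  simp only [transpose_sub, Matrix.sub_mul, Matrix.mul_sub, trace_sub, this]
  ring

lemma tr_orth {m n : ℕ} (A : Matrix (Fin m) (Fin n) ℝ) (P : Matrix (Fin m) (Fin m) ℝ)
    (Q : Matrix (Fin n) (Fin n) ℝ) (hP : Pᵀ * P = 1) (hQ : Qᵀ * Q = 1) :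
    trace ((P * A * Q)ᵀ * (P * A * Q)) = trace (Aᵀ * A) := by
  have hQ' : Q * Qᵀ = 1 := mul_eq_one_comm.mp hQ
  have e : (P * A * Q)ᵀ * (P * A * Q) = Qᵀ * ((Aᵀ * A) * Q) := by
    simp only [transpose_mul]
    calc _ = Qᵀ * (Aᵀ * (Pᵀ * P) * A * Q) := by simp only [Matrix.mul_assoc]
      _ = _ := by rw [hP]; simp [Matrix.mul_assoc]
  rw [e, trace_mul_comm, Matrix.mul_assoc, hQ', Matrix.mul_one]

lemma min_tr (L : ℕ) (lam : ℝ) {m n : ℕ} (N M : Matrix (Fin m) (Fin n) ℝ)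
    (hmin : ∀ X : Matrix (Fin m) (Fin n) ℝ, schattenLoss L lam N M ≤ schattenLoss L lam N X)
    (P : Matrix (Fin m) (Fin m) ℝ) (Q : Matrix (Fin n) (Fin n) ℝ)
    (hP : Pᵀ * P = 1) (hQ : Qᵀ * Q = 1) :
    trace (Nᵀ * (P * M * Q)) ≤ trace (Nᵀ * M) := by
  have h := hmin (P * M * Q)
  unfold schattenLoss at h
  rw [sv_inv M P Q hP hQ, frob_sq, frob_sq, tr_sq, tr_sq, tr_orth M P Q hP hQ] at h
  linarith

lemma stab {m n : ℕ} (N M : Matrix (Fin m) (Fin n) ℝ)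
    (P : Matrix (Fin m) (Fin m) ℝ) (Q : Matrix (Fin n) (Fin n) ℝ)
    (hP : Pᵀ * P = 1) (hQ : Qᵀ * Q = 1)
    (h : trace (Nᵀ * (P * M * Q)) ≤ trace (Nᵀ * M))
    (hS : P * (N + M) * Q = N + M) : P * M * Q = M := by
  have h1 := tr_sq M (P * M * Q)
  rw [tr_orth M P Q hP hQ] at h1
  have h2 := tr_sq (N + M) M
  have h3 := tr_sq (P * (N + M) * Q) (P * M * Q)
  have h4 : P * (N + M) * Q - P * M * Q = P * (N + M - M) * Q := by
    rw [Matrix.mul_sub, Matrix.sub_mul]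
  rw [h4, tr_orth _ P Q hP hQ, tr_orth _ P Q hP hQ, tr_orth _ P Q hP hQ, hS] at h3
  simp only [transpose_add, Matrix.add_mul, trace_add] at h2 h3
  have := frob_zero (M - P * M * Q) (by linarith)
  exact (sub_eq_zero.mp this).symm

lemma orthoMat {k : ℕ} (b : OrthonormalBasis (Fin k) ℝ (EuclideanSpace ℝ (Fin k))) :
    (Matrix.of fun i k => b k i : Matrix (Fin k) (Fin k) ℝ)ᵀ *
      (Matrix.of fun i k => b k i : Matrix (Fin k) (Fin k) ℝ) = 1 := by
  ext k l
  have := orthonormal_iff_ite.mp b.orthonormal k l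
  simp only [PiLp.inner_apply] at this
  rw [Matrix.mul_apply, Matrix.one_apply, ← this]
  refine Finset.sum_congr rfl fun i _ => ?_
  simp [mul_comm]

set_option maxHeartbeats 1000000 in
lemma svd {m n : ℕ} (S : Matrix (Fin m) (Fin n) ℝ) :
    ∃ (U : Matrix (Fin m) (Fin m) ℝ) (V : Matrix (Fin n) (Fin n) ℝ)
      (D : Matrix (Fin m) (Fin n) ℝ),
      Uᵀ * U = 1 ∧ Vᵀ * V = 1 ∧
      (∀ (i : Fin m) (j : Fin n), (i : ℕ) ≠ (j : ℕ) → D i j = 0) ∧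
      (∀ (i : Fin m) (j : Fin n), 0 ≤ D i j) ∧
      (∀ (i₁ i₂ : Fin m) (j₁ j₂ : Fin n), (i₁ : ℕ) = (j₁ : ℕ) → (i₂ : ℕ) = (j₂ : ℕ) →
        (i₁ : ℕ) ≤ (i₂ : ℕ) → D i₂ j₂ ≤ D i₁ j₁) ∧
      S = U * D * Vᵀ := by
  let T := Matrix.toEuclideanLin S
  have hn : Module.finrank ℝ (EuclideanSpace ℝ (Fin n)) = n := by simp
  have hT := T.isSymmetric_adjoint_comp_self
  let v := hT.eigenvectorBasis hn
  let σ : ℕ → ℝ := fun i => T.singularValues i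
  have hσ0 : ∀ i, 0 ≤ σ i := T.singularValues_nonneg
  have hσa : Antitone σ := T.singularValues_antitone
  have hσm : ∀ j, m ≤ j → σ j = 0 := by
    intro j hj
    refine T.singularValues_eq_zero_iff_le_finrank_range.mpr (le_trans ?_ hj)
    exact (Submodule.finrank_le _).trans (by simp)
  have hσn : ∀ j, n ≤ j → σ j = 0 := by
    intro j hj
    exact T.singularValues_of_finrank_le (by simpa using hj)
  have hin : ∀ i j : Fin n, inner ℝ (T (v i)) (T (v j)) = if i = j then σ j ^ 2 else 0 := by
    intro i j
    have h1 : (LinearMap.adjoint T ∘ₗ T) (v j) = (σ j ^ 2) • v j := by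
      have := hT.apply_eigenvectorBasis hn j
      rw [← T.sq_singularValues_fin hn j] at this
      exact this
    rw [← LinearMap.adjoint_inner_right]
    rw [LinearMap.comp_apply] at h1
    rw [h1, inner_smul_right, orthonormal_iff_ite.mp v.orthonormal i j]
    simp
  have hz : ∀ j : Fin n, σ j = 0 → T (v j) = 0 := by
    intro j hj
    rw [← inner_self_eq_zero (𝕜 := ℝ), hin j j, if_pos rfl, hj]
    simp
  let w : Fin m → EuclideanSpace ℝ (Fin m) := fun i =>
    if h : (i : ℕ) < n then (σ i)⁻¹ • T (v ⟨i, h⟩) else 0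
  have hw : Orthonormal ℝ (({i : Fin m | σ i ≠ 0} : Set (Fin m)).domRestrict w) := by
    rw [orthonormal_iff_ite]
    rintro ⟨i, hi⟩ ⟨j, hj⟩
    have hi' : σ i ≠ 0 := hi
    have hj' : σ j ≠ 0 := hj
    have hi2 : (i : ℕ) < n := by
      by_contra hc
      exact hi (hσn _ (not_lt.mp hc))
    have hj2 : (j : ℕ) < n := by
      by_contra hc
      exact hj (hσn _ (not_lt.mp hc))
    simp only [Set.domRestrict_apply, w, hi2, hj2, dif_pos]
    rw [inner_smul_left, inner_smul_right, hin]
    by_cases hij : i = j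
    · subst hij
      simp only [if_true, RCLike.conj_to_real]
      field_simp
    · have : ¬ (i : ℕ) = j := fun hh => hij (Fin.ext hh)
      simp [hij, this]
  obtain ⟨b, hb⟩ := hw.exists_orthonormalBasis_extension_of_card_eq (by simp)
  have hTb : ∀ (i : Fin m) (j : Fin n), (i : ℕ) = j → T (v j) = σ j • b i := by
    intro i j hij
    by_cases h0 : σ j = 0
    · rw [hz j h0, h0, zero_smul]
    · have hi : σ i ≠ 0 := by rw [hij]; exact h0
      have hlt : (i : ℕ) < n := by rw [hij]; exact j.2
      have hjj : (⟨i, hlt⟩ : Fin n) = j := Fin.ext hij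
      rw [hb i hi]
      simp only [w, hlt, dif_pos, hjj]
      rw [hij, smul_smul, mul_inv_cancel₀ h0, one_smul]
  have hVV : (Matrix.of fun i k => v k i : Matrix (Fin n) (Fin n) ℝ)ᵀ *
      (Matrix.of fun i k => v k i : Matrix (Fin n) (Fin n) ℝ) = 1 := by
    exact orthoMat v
  have hUU : (Matrix.of fun i k => b k i : Matrix (Fin m) (Fin m) ℝ)ᵀ *
      (Matrix.of fun i k => b k i : Matrix (Fin m) (Fin m) ℝ) = 1 := by
    exact orthoMat b
  refine ⟨Matrix.of fun i k => b k i, Matrix.of fun i k => v k i,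
    Matrix.of fun i j => if (i : ℕ) = (j : ℕ) then σ j else 0, hUU, hVV, ?_, ?_, ?_, ?_⟩
  · intro i j hij
    simp [hij]
  · intro i j
    simp only [Matrix.of_apply]
    split_ifs
    · exact hσ0 _
    · exact le_rfl
  · intro i₁ i₂ j₁ j₂ h1 h2 h3
    simp only [Matrix.of_apply, h1, h2, if_true]
    exact hσa (by omega)
  · have hSV : S * (Matrix.of fun i k => v k i : Matrix (Fin n) (Fin n) ℝ)
        = (Matrix.of fun i k => b k i : Matrix (Fin m) (Fin m) ℝ) *
          (Matrix.of fun (i : Fin m) (j : Fin n) => if (i : ℕ) = (j : ℕ) then σ j else 0) := by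
      ext i j
      have e1 : (S * (Matrix.of fun i k => v k i : Matrix (Fin n) (Fin n) ℝ)) i j
          = T (v j) i := by
        simp [T, Matrix.mul_apply, Matrix.toLpLin_apply, Matrix.mulVec, dotProduct]
      rw [e1, Matrix.mul_apply]
      simp only [Matrix.of_apply]
      by_cases hj : (j : ℕ) < m
      · rw [hTb ⟨j, hj⟩ j rfl, Finset.sum_eq_single ⟨j, hj⟩]
        · simp [mul_comm]
        · intro k _ hk
          have : ¬ (k : ℕ) = j := fun hh => hk (Fin.ext hh)
          simp [this]
        · simp
      · rw [hz j (hσm _ (not_lt.mp hj)), Finset.sum_eq_zero]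
        · simp
        · intro k _
          have : ¬ (k : ℕ) = j := by have := k.2; omega
          simp [this]
    rw [← hSV, Matrix.mul_assoc, mul_eq_one_comm.mp hVV, Matrix.mul_one]

lemma core {m n : ℕ} (N M : Matrix (Fin m) (Fin n) ℝ)
    (h : ∀ (P : Matrix (Fin m) (Fin m) ℝ) (Q : Matrix (Fin n) (Fin n) ℝ),
      Pᵀ * P = 1 → Qᵀ * Q = 1 → trace (Nᵀ * (P * M * Q)) ≤ trace (Nᵀ * M))
    (hD : ∀ (i : Fin m) (j : Fin n), (i : ℕ) ≠ (j : ℕ) → (N + M) i j = 0)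
    (h0 : ∀ (i : Fin m) (j : Fin n), 0 ≤ (N + M) i j)
    (hs : ∀ (i₁ i₂ : Fin m) (j₁ j₂ : Fin n), (i₁ : ℕ) = (j₁ : ℕ) → (i₂ : ℕ) = (j₂ : ℕ) →
        (i₁ : ℕ) ≤ (i₂ : ℕ) → (N + M) i₂ j₂ ≤ (N + M) i₁ j₁) :
      (∀ (i : Fin m) (j : Fin n), (i : ℕ) ≠ (j : ℕ) → N i j = 0) ∧
      (∀ (i : Fin m) (j : Fin n), (i : ℕ) ≠ (j : ℕ) → M i j = 0) ∧
      (∀ (i : Fin m) (j : Fin n), 0 ≤ N i j) ∧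
      (∀ (i : Fin m) (j : Fin n), 0 ≤ M i j) ∧
      (∀ (i₁ i₂ : Fin m) (j₁ j₂ : Fin n), (i₁ : ℕ) = (j₁ : ℕ) → (i₂ : ℕ) = (j₂ : ℕ) →
        (i₁ : ℕ) ≤ (i₂ : ℕ) → N i₂ j₂ ≤ N i₁ j₁) ∧
      (∀ (i₁ i₂ : Fin m) (j₁ j₂ : Fin n), (i₁ : ℕ) = (j₁ : ℕ) → (i₂ : ℕ) = (j₂ : ℕ) →
        (i₁ : ℕ) ≤ (i₂ : ℕ) → M i₂ j₂ ≤ M i₁ j₁) := by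
  have hM : ∀ (i : Fin m) (j : Fin n), (i : ℕ) ≠ (j : ℕ) → M i j = 0 := by
    intro i j hij
    let P : Matrix (Fin m) (Fin m) ℝ := diagonal fun k => if (k : ℕ) = i then -1 else 1
    let Q : Matrix (Fin n) (Fin n) ℝ := diagonal fun k => if (k : ℕ) = i then -1 else 1
    have hP : Pᵀ * P = 1 := by
      simp only [P, diagonal_transpose, diagonal_mul_diagonal]
      rw [← diagonal_one]; congr 1; funext k; split_ifs <;> norm_num
    have hQ : Qᵀ * Q = 1 := by
      simp only [Q, diagonal_transpose, diagonal_mul_diagonal]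
      rw [← diagonal_one]; congr 1; funext k; split_ifs <;> norm_num
    have := stab N M P Q hP hQ (h P Q hP hQ) (by
      ext a b
      simp only [P, Q, mul_diagonal, diagonal_mul]
      by_cases hab : (a : ℕ) = b
      · rw [hab]; split_ifs <;> ring
      · rw [hD a b hab]; ring)
    have := congrFun (congrFun this i) j
    simp only [P, Q, mul_diagonal, diagonal_mul, if_true, if_neg (Ne.symm hij)] at this
    linarith
  have hN : ∀ (i : Fin m) (j : Fin n), (i : ℕ) ≠ (j : ℕ) → N i j = 0 := by
    intro i j hij
    have := hD i j hij
    rw [Matrix.add_apply, hM i j hij] at this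
    linarith
  have hpos : ∀ (i : Fin m) (j : Fin n), 0 ≤ N i j * M i j := by
    intro i j
    by_cases hij : (i : ℕ) = j
    swap
    · rw [hM i j hij]; simp
    let P : Matrix (Fin m) (Fin m) ℝ := diagonal fun k => if k = i then -1 else 1
    have hP : Pᵀ * P = 1 := by
      simp only [P, diagonal_transpose, diagonal_mul_diagonal]
      rw [← diagonal_one]; congr 1; funext k; split_ifs <;> norm_num
    have h1 := h P 1 hP (by simp)
    have e : P * M * (1 : Matrix (Fin n) (Fin n) ℝ) = M - single i j (2 * M i j) := by
      ext a b
      simp only [P, Matrix.mul_one, diagonal_mul, Matrix.sub_apply, single_apply]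
      by_cases ha : a = i
      · subst ha
        by_cases hb : j = b
        · subst hb; simp; ring
        · have : M a b = 0 := hM a b (fun hh => hb (Fin.ext (by omega)))
          simp [hb, this]
      · simp [ha, Ne.symm ha]
    rw [e, Matrix.mul_sub, trace_sub, trace_mul_single] at h1
    simp at h1
    linarith
  have hsw : ∀ (i₁ i₂ : Fin m) (j₁ j₂ : Fin n), (i₁ : ℕ) = (j₁ : ℕ) → (i₂ : ℕ) = (j₂ : ℕ) →
      0 ≤ (N i₁ j₁ - N i₂ j₂) * (M i₁ j₁ - M i₂ j₂) := by
    intro i₁ i₂ j₁ j₂ h₁ h₂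
    by_cases h12 : i₁ = i₂
    · have : j₁ = j₂ := Fin.ext (by rw [← h₁, ← h₂, h12])
      subst this h12; simp
    let P : Matrix (Fin m) (Fin m) ℝ := (Equiv.swap i₁ i₂).permMatrix ℝ
    let Q : Matrix (Fin n) (Fin n) ℝ := (Equiv.swap j₁ j₂).permMatrix ℝ
    have hP : Pᵀ * P = 1 := by
      simp only [P, transpose_permMatrix, ← Matrix.permMatrix_mul]; simp
    have hQ : Qᵀ * Q = 1 := by
      simp only [Q, transpose_permMatrix, ← Matrix.permMatrix_mul]; simp
    have h1 := h P Q hP hQ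
    have e : P * M * Q = M - (single i₁ j₁ (M i₁ j₁ - M i₂ j₂)
        - single i₂ j₂ (M i₁ j₁ - M i₂ j₂)) := by
      have e0 : P * M * Q = M.submatrix (Equiv.swap i₁ i₂) (Equiv.swap j₁ j₂) := by
        simp only [P, Q, Equiv.Perm.permMatrix, PEquiv.toMatrix_toPEquiv_mul,
          PEquiv.mul_toMatrix_toPEquiv, Equiv.symm_swap, submatrix_submatrix]
        rfl
      have hj12 : j₁ ≠ j₂ := fun hh => h12 (Fin.ext (by rw [h₁, h₂, hh]))
      rw [e0]
      ext a b
      simp only [submatrix_apply, Matrix.sub_apply, single_apply]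
      have m12 : M i₁ j₂ = 0 := hM _ _ (fun hh => h12 (Fin.ext (by omega)))
      have m21 : M i₂ j₁ = 0 := hM _ _ (fun hh => h12 (Fin.ext (by omega)))
      by_cases ha1 : i₁ = a
      · subst ha1
        by_cases hb1 : j₁ = b
        · subst hb1; simp [Ne.symm h12]
        by_cases hb2 : j₂ = b
        · subst hb2; simp [hb1, Ne.symm h12, m12, m21]
        · have x1 : M i₁ b = 0 := hM _ _ (fun hh => hb1 (Fin.ext (by omega)))
          have x2 : M i₂ b = 0 := hM _ _ (fun hh => hb2 (Fin.ext (by omega)))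
          rw [Equiv.swap_apply_of_ne_of_ne (Ne.symm hb1) (Ne.symm hb2)]
          simp [hb1, hb2, x1, x2]
      by_cases ha2 : i₂ = a
      · subst ha2
        by_cases hb1 : j₁ = b
        · subst hb1; simp [h12, m12, m21, Ne.symm hj12]
        by_cases hb2 : j₂ = b
        · subst hb2; simp [h12]
        · have x1 : M i₁ b = 0 := hM _ _ (fun hh => hb1 (Fin.ext (by omega)))
          have x2 : M i₂ b = 0 := hM _ _ (fun hh => hb2 (Fin.ext (by omega)))
          rw [Equiv.swap_apply_of_ne_of_ne (Ne.symm hb1) (Ne.symm hb2)]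
          simp [hb1, hb2, x1, x2]
      rw [Equiv.swap_apply_of_ne_of_ne (Ne.symm ha1) (Ne.symm ha2)]
      have y1 : M a j₁ = 0 := hM _ _ (fun hh => ha1 (Fin.ext (by omega)))
      have y2 : M a j₂ = 0 := hM _ _ (fun hh => ha2 (Fin.ext (by omega)))
      by_cases hb1 : j₁ = b
      · subst hb1; simp [ha1, ha2, y1, y2]
      by_cases hb2 : j₂ = b
      · subst hb2; simp [ha1, ha2, y1, y2]
      rw [Equiv.swap_apply_of_ne_of_ne (Ne.symm hb1) (Ne.symm hb2)]
      simp [ha1, ha2]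
    rw [e, Matrix.mul_sub, trace_sub, Matrix.mul_sub, trace_sub, trace_mul_single,
      trace_mul_single] at h1
    simp at h1
    linarith
  refine ⟨hN, hM, ?_, ?_, ?_, ?_⟩
  · intro i j
    have h1 := hpos i j
    have h2 := h0 i j
    rw [Matrix.add_apply] at h2
    by_contra hc
    nlinarith
  · intro i j
    have h1 := hpos i j
    have h2 := h0 i j
    rw [Matrix.add_apply] at h2
    by_contra hc
    nlinarith
  · intro i₁ i₂ j₁ j₂ a b c
    have h1 := hsw i₁ i₂ j₁ j₂ a b
    have h2 := hs i₁ i₂ j₁ j₂ a b c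
    rw [Matrix.add_apply, Matrix.add_apply] at h2
    by_contra hc
    nlinarith
  · intro i₁ i₂ j₁ j₂ a b c
    have h1 := hsw i₁ i₂ j₁ j₂ a b
    have h2 := hs i₁ i₂ j₁ j₂ a b c
    rw [Matrix.add_apply, Matrix.add_apply] at h2
    by_contra hc
    nlinarith

theorem stmt7 (L : ℕ) (hL : 1 ≤ L) (lam : ℝ) (hlam : 0 < lam)
    (m n : ℕ) (Mnat Mstar : Matrix (Fin m) (Fin n) ℝ)
    (hmin : ∀ X : Matrix (Fin m) (Fin n) ℝ,
      schattenLoss L lam Mnat Mstar ≤ schattenLoss L lam Mnat X) :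
    ∃ (U : Matrix (Fin m) (Fin m) ℝ) (V : Matrix (Fin n) (Fin n) ℝ)
      (Snat Sstar : Matrix (Fin m) (Fin n) ℝ),
      Uᵀ * U = 1 ∧ Vᵀ * V = 1 ∧
      (∀ (i : Fin m) (j : Fin n), (i : ℕ) ≠ (j : ℕ) → Snat i j = 0) ∧
      (∀ (i : Fin m) (j : Fin n), (i : ℕ) ≠ (j : ℕ) → Sstar i j = 0) ∧
      (∀ (i : Fin m) (j : Fin n), 0 ≤ Snat i j) ∧
      (∀ (i : Fin m) (j : Fin n), 0 ≤ Sstar i j) ∧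
      (∀ (i₁ i₂ : Fin m) (j₁ j₂ : Fin n), (i₁ : ℕ) = (j₁ : ℕ) → (i₂ : ℕ) = (j₂ : ℕ) →
        (i₁ : ℕ) ≤ (i₂ : ℕ) → Snat i₂ j₂ ≤ Snat i₁ j₁) ∧
      (∀ (i₁ i₂ : Fin m) (j₁ j₂ : Fin n), (i₁ : ℕ) = (j₁ : ℕ) → (i₂ : ℕ) = (j₂ : ℕ) →
        (i₁ : ℕ) ≤ (i₂ : ℕ) → Sstar i₂ j₂ ≤ Sstar i₁ j₁) ∧
      Mnat = U * Snat * Vᵀ ∧ Mstar = U * Sstar * Vᵀ := by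
  obtain ⟨U, V, D, hU, hV, hD, h0, hs, hS⟩ := svd (Mnat + Mstar)
  have hU' : U * Uᵀ = 1 := mul_eq_one_comm.mp hU
  have hV' : V * Vᵀ = 1 := mul_eq_one_comm.mp hV
  have back : ∀ X : Matrix (Fin m) (Fin n) ℝ, X = U * (Uᵀ * X * V) * Vᵀ := by
    intro X
    calc X = (U * Uᵀ) * X * (V * Vᵀ) := by rw [hU', hV']; simp
      _ = _ := by simp only [Matrix.mul_assoc]
  have hsum : Uᵀ * Mnat * V + Uᵀ * Mstar * V = D := by
    rw [← Matrix.add_mul, ← Matrix.mul_add, hS]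
    calc _ = (Uᵀ * U) * D * (Vᵀ * V) := by simp only [Matrix.mul_assoc]
      _ = D := by rw [hU, hV]; simp
  have key : ∀ (P : Matrix (Fin m) (Fin m) ℝ) (Q : Matrix (Fin n) (Fin n) ℝ),
      Pᵀ * P = 1 → Qᵀ * Q = 1 →
      trace ((Uᵀ * Mnat * V)ᵀ * (P * (Uᵀ * Mstar * V) * Q))
        ≤ trace ((Uᵀ * Mnat * V)ᵀ * (Uᵀ * Mstar * V)) := by
    intro P Q hP hQ
    have h1 := min_tr L lam Mnat Mstar hmin (U * P * Uᵀ) (V * Q * Vᵀ)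
      (by
        simp only [transpose_mul, transpose_transpose]
        calc _ = U * (Pᵀ * (Uᵀ * U) * P) * Uᵀ := by simp only [Matrix.mul_assoc]
          _ = 1 := by rw [hU, Matrix.mul_one, hP, Matrix.mul_one, hU'])
      (by
        simp only [transpose_mul, transpose_transpose]
        calc _ = V * (Qᵀ * (Vᵀ * V) * Q) * Vᵀ := by simp only [Matrix.mul_assoc]
          _ = 1 := by rw [hV, Matrix.mul_one, hQ, Matrix.mul_one, hV'])
    have e1 : trace ((Uᵀ * Mnat * V)ᵀ * (P * (Uᵀ * Mstar * V) * Q))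
        = trace (Mnatᵀ * (U * P * Uᵀ * Mstar * (V * Q * Vᵀ))) := by
      simp only [transpose_mul, transpose_transpose]
      rw [Matrix.mul_assoc, trace_mul_comm]
      simp only [Matrix.mul_assoc]
    have e2 : trace ((Uᵀ * Mnat * V)ᵀ * (Uᵀ * Mstar * V)) = trace (Mnatᵀ * Mstar) := by
      simp only [transpose_mul, transpose_transpose]
      rw [Matrix.mul_assoc, trace_mul_comm]
      calc _ = trace (Mnatᵀ * ((U * Uᵀ) * Mstar * (V * Vᵀ))) := by simp only [Matrix.mul_assoc]
        _ = _ := by rw [hU', hV']; simp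
    rw [e1, e2]; exact h1
  obtain ⟨a, b, c, d, e, f⟩ := core _ _ key (by rwa [hsum]) (by rwa [hsum]) (by rwa [hsum])
  exact ⟨U, V, _, _, hU, hV, a, b, c, d, e, f, back _, back _⟩
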